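/- (Transportation formula for strongly monotone operators.) Let 𝒳 be a finite-dimensional real inner product space, β ≥ 0, and T : 𝒳 ⇉ 𝒳 a maximal β-strongly monotone operator. Suppose t_i ∈ T(u_i) for i = 1, …, k, and define t̄_k := (1/k)Σ_{i=1}^{k} t_i, ū_k := (1/k)Σ_{i=1}^{k} u_i, and ε_k := (1/k)Σ_{i=1}^{k} ⟨t_i − βu_i, u_i − ū_k⟩. Then ε_k ≥ 0 and t̄_k ∈ T^[ε_k](ū_k). -/

import Mathlib

/-!
Subtracting `β • id` turns a `β`-strongly monotone `T` into a monotone operator, and every point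
`(ū, t̄ - β ū)` of `(T - β • id)^[ε]` gives a point `(ū, t̄)` of `T^[ε]`, so it suffices to treat
monotone operators. There, writing `ā` and `ū` for averages and `ε` for the average of
`⟪aᵢ, uᵢ - ū⟫`, the average of `⟪aᵢ - b, uᵢ - y⟫` is `ε + ⟪ā - b, ū - y⟫`. It is nonnegative for
every `b ∈ T y`, which is the membership. Taking `(y, b) = (uⱼ, aⱼ)` in the membership and averaging
over `j` gives `-ε ≤ ε`.
-/

open RealInnerProductSpace Filter Pointwise

/-- The inner product on the triple product space `𝒵 = 𝒳 × 𝒳 × 𝒳`. -/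
noncomputable def inner3 {X : Type*} [NormedAddCommGroup X] [InnerProductSpace ℝ X]
    (z z' : X × X × X) : ℝ :=
  ⟪z.1, z'.1⟫ + ⟪z.2.1, z'.2.1⟫ + ⟪z.2.2, z'.2.2⟫

/-- The linear map `ℒ_θ̃(u,v,x) := ((1−θ̃)u + θ̃v − x, (θ̃−2)u + (1−θ̃)v + x, u − v)`. -/
def Lmap {X : Type*} [NormedAddCommGroup X] [InnerProductSpace ℝ X]
    (θ : ℝ) (z : X × X × X) : X × X × X :=
  ((1 - θ) • z.1 + θ • z.2.1 - z.2.2,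
    (θ - 2) • z.1 + (1 - θ) • z.2.1 + z.2.2,
    z.1 - z.2.1)

/-- The operator `(ℒ_θ̃ + γC)(u,v,x)` where `C(u,v,x) := A(u) × B(v) × {0}`. -/
def LC {X : Type*} [NormedAddCommGroup X] [InnerProductSpace ℝ X]
    (θ γ : ℝ) (A B : X → Set X) (z : X × X × X) : Set (X × X × X) :=
  {rr | ∃ a ∈ A z.1, ∃ b ∈ B z.2.1, rr = Lmap θ z + γ • ((a, b, (0 : X)) : X × X × X)}

/-- `T : 𝒳 ⇉ 𝒳` is β-strongly monotone (β = 0 meaning just monotone). -/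
def StrMono {X : Type*} [NormedAddCommGroup X] [InnerProductSpace ℝ X]
    (β : ℝ) (T : X → Set X) : Prop :=
  ∀ x x' w w' : X, w ∈ T x → w' ∈ T x' → β * ‖x - x'‖ ^ 2 ≤ ⟪w - w', x - x'⟫

/-- `T : 𝒳 ⇉ 𝒳` is maximal β-strongly monotone: it is β-strongly monotone and its graph
is not properly contained in the graph of another monotone operator. -/
def MaxStrMono {X : Type*} [NormedAddCommGroup X] [InnerProductSpace ℝ X]
    (β : ℝ) (T : X → Set X) : Prop :=
  StrMono β T ∧ ∀ T' : X → Set X, StrMono 0 T' → (∀ x, T x ⊆ T' x) → T' = T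

/-- Monotonicity of an operator on the triple product space `𝒵 = 𝒳³`. -/
def Mono3 {X : Type*} [NormedAddCommGroup X] [InnerProductSpace ℝ X]
    (T : (X × X × X) → Set (X × X × X)) : Prop :=
  ∀ z z' t t', t ∈ T z → t' ∈ T z' → 0 ≤ inner3 (z - z') (t - t')

/-- Maximal monotonicity of an operator on the triple product space `𝒵 = 𝒳³`. -/
def MaxMono3 {X : Type*} [NormedAddCommGroup X] [InnerProductSpace ℝ X]
    (T : (X × X × X) → Set (X × X × X)) : Prop :=
  Mono3 T ∧ ∀ T', Mono3 T' → (∀ z, T z ⊆ T' z) → T' = T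

/-- The ε-enlargement `T^[ε]` of an operator on `𝒳`. -/
def epsEnlX {X : Type*} [NormedAddCommGroup X] [InnerProductSpace ℝ X]
    (T : X → Set X) (ε : ℝ) (z : X) : Set X :=
  {t | ∀ z' t' : X, t' ∈ T z' → -ε ≤ ⟪t - t', z - z'⟫}

/-- The relaxed Peaceman–Rachford splitting method with relaxation parameter `θ` and
scaling `γ`: for `k ≥ 1`, `u_k = J_{γA}(x_{k−1})`, `v_k = J_{γB}(2u_k − x_{k−1})`
(expressed through resolvent inclusions) and `x_k = x_{k−1} + θ(v_k − u_k)`. -/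
structure RPR {X : Type*} [NormedAddCommGroup X] [InnerProductSpace ℝ X]
    (A B : X → Set X) (γ θ : ℝ) (x u v : ℕ → X) : Prop where
  resA : ∀ k, 1 ≤ k → x (k - 1) - u k ∈ γ • A (u k)
  resB : ∀ k, 1 ≤ k → (2 : ℝ) • u k - x (k - 1) - v k ∈ γ • B (v k)
  step : ∀ k, 1 ≤ k → x k = x (k - 1) + θ • (v k - u k)

theorem sum_mul_inner_sub_sub {X ι : Type*} [SeminormedAddCommGroup X] [InnerProductSpace ℝ X]
    {s : Finset ι} {w : ι → ℝ} (hw : ∑ i ∈ s, w i = 1) {a u : ι → X} {ab ub : X}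
    (hab : ab = ∑ i ∈ s, w i • a i) (hub : ub = ∑ i ∈ s, w i • u i) (b y : X) :
    ∑ i ∈ s, w i * ⟪a i - b, u i - y⟫ =
      ∑ i ∈ s, w i * ⟪a i, u i - ub⟫ + ⟪ab - b, ub - y⟫ := by
  have ha (z : X) : ∑ i ∈ s, w i * ⟪a i, z⟫ = ⟪ab, z⟫ := by
    simp only [hab, sum_inner, real_inner_smul_left]
  have hu (z : X) : ∑ i ∈ s, w i * ⟪z, u i⟫ = ⟪z, ub⟫ := by
    simp only [hub, inner_sum, real_inner_smul_right]
  calc ∑ i ∈ s, w i * ⟪a i - b, u i - y⟫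
      = ∑ i ∈ s, (w i * ⟪a i, u i - ub⟫ + w i * ⟪a i, ub - y⟫ -
          w i * ⟪b, u i⟫ + w i * ⟪b, y⟫) := by
        refine Finset.sum_congr rfl fun i _ ↦ ?_
        simp only [inner_sub_left, inner_sub_right]
        ring
    _ = ∑ i ∈ s, w i * ⟪a i, u i - ub⟫ + ⟪ab, ub - y⟫ - ⟪b, ub⟫ + ⟪b, y⟫ := by
        rw [Finset.sum_add_distrib, Finset.sum_sub_distrib, Finset.sum_add_distrib, ha, hu,
          ← Finset.sum_mul, hw, one_mul]
    _ = ∑ i ∈ s, w i * ⟪a i, u i - ub⟫ + ⟪ab - b, ub - y⟫ := by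
        simp only [inner_sub_left, inner_sub_right]
        ring

theorem inner_sub_smul_sub_sub_smul {X : Type*} [SeminormedAddCommGroup X] [InnerProductSpace ℝ X]
    (β : ℝ) (x x' t t' : X) :
    ⟪(t - β • x) - (t' - β • x'), x - x'⟫ = ⟪t - t', x - x'⟫ - β * ‖x - x'‖ ^ 2 := by
  rw [sub_sub_sub_comm, ← smul_sub, inner_sub_left, real_inner_smul_left,
    real_inner_self_eq_norm_sq]

section

variable {X ι : Type*} [NormedAddCommGroup X] [InnerProductSpace ℝ X]
  {β ε : ℝ} {T : X → Set X} {s : Finset ι} {w : ι → ℝ} {t u : ι → X} {tb ub : X}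

/-- The operator `T - β • id`, which is monotone exactly when `T` is `β`-strongly monotone. -/
def subSMulId (T : X → Set X) (β : ℝ) (x : X) : Set X :=
  (fun t ↦ t - β • x) '' T x

theorem sub_smul_mem_subSMulId {x t : X} (ht : t ∈ T x) : t - β • x ∈ subSMulId T β x :=
  Set.mem_image_of_mem _ ht

theorem strMono_zero_subSMulId_iff : StrMono 0 (subSMulId T β) ↔ StrMono β T := by
  constructor
  · intro h x x' t t' ht ht'
    have := h x x' _ _ (sub_smul_mem_subSMulId ht) (sub_smul_mem_subSMulId ht')
    rw [inner_sub_smul_sub_sub_smul] at this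
    linarith
  · rintro h x x' _ _ ⟨t, ht, rfl⟩ ⟨t', ht', rfl⟩
    have := h x x' t t' ht ht'
    rw [inner_sub_smul_sub_sub_smul]
    linarith

theorem mem_epsEnlX_of_sub_smul_mem (hβ : 0 ≤ β) {x t : X}
    (h : t - β • x ∈ epsEnlX (subSMulId T β) ε x) : t ∈ epsEnlX T ε x := by
  intro x' t' ht'
  calc -ε ≤ ⟪(t - β • x) - (t' - β • x'), x - x'⟫ := h x' _ (sub_smul_mem_subSMulId ht')
    _ = ⟪t - t', x - x'⟫ - β * ‖x - x'‖ ^ 2 := inner_sub_smul_sub_sub_smul ..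
    _ ≤ ⟪t - t', x - x'⟫ := sub_le_self _ (by positivity)

theorem StrMono.sum_smul_mem_epsEnlX (hT : StrMono 0 T) (hw₀ : ∀ i ∈ s, 0 ≤ w i)
    (hw₁ : ∑ i ∈ s, w i = 1) (ht : ∀ i ∈ s, t i ∈ T (u i))
    (htb : tb = ∑ i ∈ s, w i • t i) (hub : ub = ∑ i ∈ s, w i • u i) :
    tb ∈ epsEnlX T (∑ i ∈ s, w i * ⟪t i, u i - ub⟫) ub := by
  intro y b hb
  have hmono : ∀ i ∈ s, 0 ≤ ⟪t i - b, u i - y⟫ := fun i hi ↦ by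
    simpa only [zero_mul] using hT _ _ _ _ (ht i hi) hb
  have hsum : 0 ≤ ∑ i ∈ s, w i * ⟪t i - b, u i - y⟫ :=
    Finset.sum_nonneg fun i hi ↦ mul_nonneg (hw₀ i hi) (hmono i hi)
  rw [sum_mul_inner_sub_sub hw₁ htb hub] at hsum
  linarith

theorem StrMono.sum_mul_inner_nonneg (hT : StrMono 0 T) (hw₀ : ∀ i ∈ s, 0 ≤ w i)
    (hw₁ : ∑ i ∈ s, w i = 1) (ht : ∀ i ∈ s, t i ∈ T (u i))
    (hub : ub = ∑ i ∈ s, w i • u i) :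
    0 ≤ ∑ i ∈ s, w i * ⟪t i, u i - ub⟫ := by
  set ε := ∑ i ∈ s, w i * ⟪t i, u i - ub⟫
  set tb := ∑ i ∈ s, w i • t i with htb
  have hmem : tb ∈ epsEnlX T ε ub := hT.sum_smul_mem_epsEnlX hw₀ hw₁ ht htb hub
  have : -ε ≤ ε := calc
    -ε = ∑ i ∈ s, w i * -ε := by rw [← Finset.sum_mul, hw₁, one_mul]
    _ ≤ ∑ i ∈ s, w i * ⟪tb - t i, ub - u i⟫ := Finset.sum_le_sum fun i hi ↦
        mul_le_mul_of_nonneg_left (hmem _ _ (ht i hi)) (hw₀ i hi)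
    _ = ∑ i ∈ s, w i * ⟪t i - tb, u i - ub⟫ := by
        simp only [← inner_neg_neg (tb - _), neg_sub]
    _ = ε := by
        rw [sum_mul_inner_sub_sub hw₁ htb hub, sub_self, inner_zero_left, add_zero]
  linarith

theorem stmt17_general (hβ : 0 ≤ β) (hT : StrMono β T) (hw₀ : ∀ i ∈ s, 0 ≤ w i)
    (hw₁ : ∑ i ∈ s, w i = 1) (ht : ∀ i ∈ s, t i ∈ T (u i))
    (htb : tb = ∑ i ∈ s, w i • t i) (hub : ub = ∑ i ∈ s, w i • u i)
    (hε : ε = ∑ i ∈ s, w i * ⟪t i - β • u i, u i - ub⟫) :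
    0 ≤ ε ∧ tb ∈ epsEnlX T ε ub := by
  have hmono : StrMono 0 (subSMulId T β) := strMono_zero_subSMulId_iff.2 hT
  have hmem : ∀ i ∈ s, t i - β • u i ∈ subSMulId T β (u i) := fun i hi ↦
    sub_smul_mem_subSMulId (ht i hi)
  have hmean : tb - β • ub = ∑ i ∈ s, w i • (t i - β • u i) := by
    simp only [htb, hub, smul_sub, Finset.sum_sub_distrib, Finset.smul_sum, smul_comm β]
  rw [hε]
  exact ⟨hmono.sum_mul_inner_nonneg hw₀ hw₁ hmem hub,
    mem_epsEnlX_of_sub_smul_mem hβ (hmono.sum_smul_mem_epsEnlX hw₀ hw₁ hmem hmean hub)⟩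

end

/-- Transportation formula for maximal β-strongly monotone operators. -/
theorem stmt17 {X : Type*} [NormedAddCommGroup X] [InnerProductSpace ℝ X]
    [FiniteDimensional ℝ X]
    (β : ℝ) (hβ : 0 ≤ β) (T : X → Set X) (hT : MaxStrMono β T)
    (k : ℕ) (hk : 1 ≤ k) (t u : ℕ → X)
    (ht : ∀ i, 1 ≤ i → i ≤ k → t i ∈ T (u i))
    (tb ub : X) (εk : ℝ)
    (htb : tb = (k : ℝ)⁻¹ • ∑ i ∈ Finset.Icc 1 k, t i)
    (hub : ub = (k : ℝ)⁻¹ • ∑ i ∈ Finset.Icc 1 k, u i)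
    (hεk : εk = (k : ℝ)⁻¹ * ∑ i ∈ Finset.Icc 1 k, ⟪t i - β • u i, u i - ub⟫) :
    0 ≤ εk ∧ tb ∈ epsEnlX T εk ub := by
  rw [Finset.smul_sum] at htb hub
  rw [Finset.mul_sum] at hεk
  exact stmt17_general hβ hT.1 (fun _ _ ↦ by positivity) (by simp [show k ≠ 0 by lia])
    (by simpa using ht) htb hub hεk
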